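/- Assume n ≥ 2, 1 ≤ k < d, R1 > 0 and R2 > −R1, and set T*(m) = 1 + (R2/R1)·(m−1)/(n−1) for m = 1,…,n (so T*(m) > 0 for all m). Then T* minimizes the mean squared error of the Rand-k-Spatial estimator over the family: for every T : {1,…,n} → ℝ∖{0} for which Σ_{m=1}^n (p/T(m))·C(n−1,m−1)·p^{m−1}·(1−p)^{n−m} ≠ 0, the MSE of the Rand-k-Spatial estimator with scaling function T* is at most the MSE with scaling function T, i.e. E[||x̂^{T*} − x̄||²] ≤ E[||x̂^{T} − x̄||²]. -/

import Mathlib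

open Finset

noncomputable section

/-- A size-`k` subset of the coordinate set `{1,…,d}`. -/
abbrev KSub (d k : ℕ) := {S : Finset (Fin d) // S.card = k}

/-- Sample space: each of the `n` nodes independently picks a uniformly random
size-`k` subset of coordinates. -/
abbrev Omega (n d k : ℕ) := Fin n → KSub d k

/-- Expectation with respect to the uniform distribution on `Omega n d k`
(each `n`-tuple of `k`-subsets has probability `1 / C(d,k)^n`). -/
def Exp {n d k : ℕ} (f : Omega n d k → ℝ) : ℝ :=
  (∑ ω : Omega n d k, f ω) / (Fintype.card (Omega n d k) : ℝ)

/-- The sparsified vector of node `i`: `h_{ij} = x_{ij}` if `j ∈ S_i`, else `0`. -/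
def spars {n d k : ℕ} (x : Fin n → Fin d → ℝ) (ω : Omega n d k) (i : Fin n) (j : Fin d) : ℝ :=
  if j ∈ (ω i).1 then x i j else 0

/-- The per-coordinate sampling probability `p = k/d`. -/
def pr (d k : ℕ) : ℝ := (k : ℝ) / (d : ℝ)

/-- `M_j`: the number of nodes that send coordinate `j`. -/
def Mcount {n d k : ℕ} (ω : Omega n d k) (j : Fin d) : ℕ :=
  (Finset.univ.filter fun i : Fin n => j ∈ (ω i).1).card

/-- The normalizing constant
`β̄ = ( Σ_{m=1}^n (p/T(m))·C(n−1,m−1)·p^{m−1}·(1−p)^{n−m} )⁻¹`. -/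
def betaBar (n d k : ℕ) (T : ℕ → ℝ) : ℝ :=
  (∑ m ∈ Finset.Icc 1 n,
      (pr d k / T m) * ((n - 1).choose (m - 1) : ℝ) * pr d k ^ (m - 1)
        * (1 - pr d k) ^ (n - m))⁻¹

/-- The Rand-k-Spatial estimate of coordinate `j` of the mean:
`x̂_j = (1/n)·(β̄/T(M_j))·Σᵢ h_{ij}` when `M_j ≥ 1`, and `x̂_j = 0` when `M_j = 0`. -/
def spatialEst {n d k : ℕ} (x : Fin n → Fin d → ℝ) (T : ℕ → ℝ) (ω : Omega n d k)
    (j : Fin d) : ℝ :=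
  if 1 ≤ Mcount ω j then
    (1 / (n : ℝ)) * (betaBar n d k T / T (Mcount ω j)) * ∑ i : Fin n, spars x ω i j
  else 0

/-- The mean squared error `E[‖x̂ᵀ − x̄‖²]` of the Rand-k-Spatial estimator with
scaling function `T`. -/
def mseSpatial (n d k : ℕ) (x : Fin n → Fin d → ℝ) (T : ℕ → ℝ) : ℝ :=
  Exp (fun ω : Omega n d k =>
    ∑ j : Fin d, (spatialEst x T ω j - (1 / (n : ℝ)) * ∑ i : Fin n, x i j) ^ 2)

/-!
The error of the estimator depends on `T` only through the coefficients `a m = β̄ / T m`. A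
coordinate is sent by a Bernoulli(`p`) random set of nodes. With `w m` the probability that a given
node sends it together with exactly `m - 1` others, the normalization by `β̄` says precisely that
`∑ w m * a m = 1` (unbiasedness), and the mean squared error is
`n⁻² * (∑ w m * (a m) ^ 2 * (R₁ + (m - 1) / (n - 1) * R₂) - (R₁ + R₂))`. This is a diagonal
quadratic form in `a` to be minimized on a hyperplane, and the Lagrange condition makes `a m`
proportional to `(R₁ + (m - 1) / (n - 1) * R₂)⁻¹`, that is, `T m` proportional to
`1 + (R₂ / R₁) * (m - 1) / (n - 1)`.
-/

section Sums

variable {ι R : Type*}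

/-- The Lagrange condition `q i * v i = c * ℓ i` identifies the minimizer of a diagonal quadratic
form on a hyperplane. -/
lemma sum_mul_sq_le_sum_mul_sq_of_mul_eq [CommRing R] [LinearOrder R] [IsStrictOrderedRing R]
    {s : Finset ι} {q ℓ u v : ι → R} {c : R} (hq : ∀ i ∈ s, 0 ≤ q i)
    (hv : ∀ i ∈ s, q i * v i = c * ℓ i) (huv : ∑ i ∈ s, ℓ i * u i = ∑ i ∈ s, ℓ i * v i) :
    ∑ i ∈ s, q i * v i ^ 2 ≤ ∑ i ∈ s, q i * u i ^ 2 := by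
  have orthogonal : ∑ i ∈ s, q i * v i * (u i - v i) = 0 := by
    rw [sum_congr rfl fun i hi => by rw [hv i hi, mul_assoc, mul_sub], ← mul_sum,
      sum_sub_distrib, huv, sub_self, mul_zero]
  have nonneg : 0 ≤ ∑ i ∈ s, q i * (u i - v i) ^ 2 :=
    sum_nonneg fun i hi => mul_nonneg (hq i hi) (sq_nonneg _)
  calc ∑ i ∈ s, q i * v i ^ 2
      ≤ ∑ i ∈ s, q i * v i ^ 2 + 2 * ∑ i ∈ s, q i * v i * (u i - v i)
          + ∑ i ∈ s, q i * (u i - v i) ^ 2 := by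
        rw [orthogonal, mul_zero, add_zero]
        exact le_add_of_nonneg_right nonneg
    _ = ∑ i ∈ s, q i * u i ^ 2 := by
        rw [mul_sum, ← sum_add_distrib, ← sum_add_distrib]
        exact sum_congr rfl fun i _ => by ring

lemma sq_sum_eq_sum_sq_add_sum_offDiag [CommSemiring R] (s : Finset ι) (y : ι → R) :
    (∑ i ∈ s, y i) ^ 2 = ∑ i ∈ s, y i ^ 2 + ∑ z ∈ s.offDiag, y z.1 * y z.2 := by
  classical
  rw [sq, sum_mul_sum, ← sum_product', ← diag_union_offDiag, sum_union (disjoint_diag_offDiag s),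
    sum_diag]
  simp only [sq]

lemma sum_sum_eq_sum_diag_add_two_mul_sum_lt [NonAssocSemiring R] [Fintype ι] [LinearOrder ι]
    {f : ι → ι → R} (hf : ∀ i l, f i l = f l i) :
    ∑ i, ∑ l, f i l = ∑ i, f i i + 2 * ∑ i, ∑ l, if i < l then f i l else 0 := by
  have trichotomy (i l : ι) : f i l = (if i = l then f i l else 0) +
      ((if i < l then f i l else 0) + if l < i then f l i else 0) := by
    rcases lt_trichotomy i l with h | rfl | h
    · simp [h, h.ne, h.not_gt]
    · simp
    · simp [h, h.ne', h.not_gt, hf i l]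
  have swap : ∑ i, ∑ l, (if l < i then f l i else 0) = ∑ i, ∑ l, if i < l then f i l else 0 :=
    sum_comm
  calc ∑ i, ∑ l, f i l
      = ∑ i, ∑ l, ((if i = l then f i l else 0) +
          ((if i < l then f i l else 0) + if l < i then f l i else 0)) :=
        sum_congr rfl fun i _ => sum_congr rfl fun l _ => trichotomy i l
    _ = ∑ i, f i i + 2 * ∑ i, ∑ l, if i < l then f i l else 0 := by
        simp only [sum_add_distrib, swap, sum_ite_eq, mem_univ, if_true, two_mul]

end Sums

section DoubleCounting

variable {α ι R : Type*} [Fintype α] [DecidableEq α]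

lemma sum_superset_card [AddCommMonoid R] (s : Finset α) (g : ℕ → R) :
    ∑ A with s ⊆ A, g #A =
      ∑ m ∈ Icc #s (Fintype.card α), (Fintype.card α - #s).choose (m - #s) • g m := by
  have card_mem : ∀ A ∈ ({A | s ⊆ A} : Finset (Finset α)), #A ∈ Icc #s (Fintype.card α) :=
    fun A hA => mem_Icc.2 ⟨card_le_card (mem_filter.1 hA).2, card_le_univ A⟩
  rw [← sum_fiberwise_of_maps_to' card_mem]
  refine sum_congr rfl fun m hm => ?_
  rw [sum_const, ← card_univ, ← card_filter_powersetCard_subset s univ m (subset_univ s)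
    (mem_Icc.1 hm).1]
  congr 2
  ext A
  simp [and_comm]

lemma sum_card_mul_sum_filter_subset [CommSemiring R] {I : Finset ι} {s : ι → Finset α} {r : ℕ}
    (hs : ∀ i ∈ I, #(s i) = r) (g : ℕ → R) (f : ι → R) :
    ∑ A, g #A * ∑ i ∈ I with s i ⊆ A, f i =
      (∑ m ∈ Icc r (Fintype.card α), (Fintype.card α - r).choose (m - r) * g m) *
        ∑ i ∈ I, f i := by
  calc ∑ A, g #A * ∑ i ∈ I with s i ⊆ A, f i
      = ∑ i ∈ I, (∑ A with s i ⊆ A, g #A) * f i := by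
        simp_rw [mul_sum, sum_mul]
        exact sum_comm' (by simp [and_comm])
    _ = _ := by
        rw [mul_sum]
        refine sum_congr rfl fun i hi => ?_
        rw [sum_superset_card, hs i hi]
        simp only [nsmul_eq_mul]

lemma card_filter_setOf_eq {β : Type*} [Fintype β] (P : β → Prop) [DecidablePred P]
    (A : Finset α) :
    #{ω : α → β | ({i | P (ω i)} : Finset α) = A} = #{b | P b} ^ #A * #{b | ¬P b} ^ #Aᶜ := by
  have fiber_eq_piFinset : ({ω : α → β | ({i | P (ω i)} : Finset α) = A} : Finset (α → β)) =
      Fintype.piFinset fun i => if i ∈ A then ({b | P b} : Finset β)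
        else ({b | ¬P b} : Finset β) := by
    ext ω
    simp only [mem_filter_univ, Fintype.mem_piFinset, Finset.ext_iff]
    refine forall_congr' fun i => ?_
    by_cases hi : i ∈ A <;> simp [hi]
  rw [fiber_eq_piFinset, Fintype.card_piFinset]
  simp_rw [apply_ite card]
  rw [prod_ite, prod_const, prod_const, filter_mem_eq_inter, univ_inter,
    filter_notMem_eq_sdiff, ← compl_eq_univ_sdiff]

end DoubleCounting

lemma choose_sub_two_eq_choose_sub_one_mul {K : Type*} [Field K] [CharZero K] {n m : ℕ}
    (hm : 2 ≤ m) (hmn : m ≤ n) :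
    ((n - 2).choose (m - 2) : K) = (n - 1).choose (m - 1) * (((m : K) - 1) / ((n : K) - 1)) := by
  obtain ⟨r, rfl⟩ := Nat.exists_eq_add_of_le' hm
  obtain ⟨N, rfl⟩ := Nat.exists_eq_add_of_le' (hm.trans hmn)
  have absorption : ((N : K) + 1) * N.choose r = (N + 1).choose (r + 1) * ((r : K) + 1) :=
    mod_cast Nat.add_one_mul_choose_eq N r
  have succ_ne_zero : (N : K) + 1 ≠ 0 := Nat.cast_add_one_ne_zero N
  have cast_sub (a : ℕ) : ((a + 2 : ℕ) : K) - 1 = a + 1 := by push_cast; ring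
  rw [cast_sub, cast_sub, mul_div_assoc', eq_div_iff succ_ne_zero, mul_comm]
  exact absorption

section Bernoulli

variable {α : Type*} [Fintype α]

/-- Expectation of `F A` for a Bernoulli random subset `A` of `α`: each element belongs to `A`
with probability `p`, independently. -/
def bernoulliExp (p : ℝ) (F : Finset α → ℝ) : ℝ :=
  ∑ A, p ^ #A * (1 - p) ^ (Fintype.card α - #A) * F A

/-- The probability that a Bernoulli(`p`) random subset of an `n`-element set has `m` elements,
one of them a given point. Only meaningful for `1 ≤ m ≤ n`. -/
def inclusionWeight (p : ℝ) (n m : ℕ) : ℝ :=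
  (n - 1).choose (m - 1) * (p ^ m * (1 - p) ^ (n - m))

lemma inclusionWeight_pos {p : ℝ} (hp : 0 < p) (hp' : p < 1) {n m : ℕ} (hmn : m ≤ n) :
    0 < inclusionWeight p n m :=
  mul_pos (Nat.cast_pos.2 (Nat.choose_pos (Nat.sub_le_sub_right hmn 1)))
    (mul_pos (pow_pos hp m) (pow_pos (sub_pos.2 hp') (n - m)))

lemma bernoulliExp_const (p c : ℝ) : bernoulliExp p (fun _ : Finset α => c) = c := by
  rw [bernoulliExp, ← sum_mul, Fintype.sum_pow_mul_eq_add_pow, add_sub_cancel, one_pow, one_mul]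

lemma bernoulliExp_card_mul_sum (p : ℝ) (c : ℕ → ℝ) (y : α → ℝ) :
    bernoulliExp p (fun A => c #A * ∑ i ∈ A, y i) =
      (∑ m ∈ Icc 1 (Fintype.card α), inclusionWeight p (Fintype.card α) m * c m) * ∑ i, y i := by
  classical
  have h := sum_card_mul_sum_filter_subset (I := univ) (s := fun i : α => {i})
    (fun i _ => card_singleton i)
    (fun m => p ^ m * (1 - p) ^ (Fintype.card α - m) * c m) y
  simp only [singleton_subset_iff, filter_mem_eq_inter, univ_inter] at h
  simpa only [bernoulliExp, inclusionWeight, mul_assoc] using h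

lemma bernoulliExp_card_mul_sum_offDiag (p : ℝ) (c : ℕ → ℝ) (f : α × α → ℝ) :
    bernoulliExp p (fun A => c #A * ∑ z ∈ A.offDiag, f z) =
      (∑ m ∈ Icc 1 (Fintype.card α), inclusionWeight p (Fintype.card α) m *
        (((m : ℝ) - 1) / ((Fintype.card α : ℝ) - 1) * c m)) * ∑ z ∈ univ.offDiag, f z := by
  classical
  set n := Fintype.card α
  have filter_pair (A : Finset α) :
      ({z ∈ univ.offDiag | {z.1, z.2} ⊆ A} : Finset (α × α)) = A.offDiag := by
    ext z
    simp [insert_subset_iff, and_left_comm, and_comm]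
  have h := sum_card_mul_sum_filter_subset (I := univ.offDiag) (s := fun z : α × α => {z.1, z.2})
    (fun z hz => card_pair (mem_offDiag.1 hz).2.2) (fun m => p ^ m * (1 - p) ^ (n - m) * c m) f
  simp only [filter_pair] at h
  simp only [bernoulliExp, mul_assoc] at h ⊢
  rw [h]
  congr 1
  -- The pair count has no term `m = 1`, where the factor `(m - 1) / (n - 1)` vanishes.
  refine sum_subset_zero_on_sdiff (Icc_subset_Icc_left one_le_two) ?_ ?_
  · intro m hm
    obtain rfl : m = 1 := by
      simp only [mem_sdiff, mem_Icc] at hm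
      lia
    simp
  · intro m hm
    rw [choose_sub_two_eq_choose_sub_one_mul (mem_Icc.1 hm).1 (mem_Icc.1 hm).2, inclusionWeight]
    ring

lemma bernoulliExp_card_mul_sq_sum (p : ℝ) (c : ℕ → ℝ) (y : α → ℝ) :
    bernoulliExp p (fun A => c #A * (∑ i ∈ A, y i) ^ 2) =
      ∑ m ∈ Icc 1 (Fintype.card α), inclusionWeight p (Fintype.card α) m *
        (∑ i, y i ^ 2 + ((m : ℝ) - 1) / ((Fintype.card α : ℝ) - 1) *
          ((∑ i, y i) ^ 2 - ∑ i, y i ^ 2)) * c m := by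
  have split : bernoulliExp p (fun A => c #A * (∑ i ∈ A, y i) ^ 2) =
      bernoulliExp p (fun A => c #A * ∑ i ∈ A, y i ^ 2) +
        bernoulliExp p (fun A => c #A * ∑ z ∈ A.offDiag, y z.1 * y z.2) := by
    simp only [bernoulliExp, sq_sum_eq_sum_sq_add_sum_offDiag, mul_add, sum_add_distrib]
  rw [split, bernoulliExp_card_mul_sum, bernoulliExp_card_mul_sum_offDiag,
    sq_sum_eq_sum_sq_add_sum_offDiag univ, add_sub_cancel_left, sum_mul, sum_mul,
    ← sum_add_distrib]
  exact sum_congr rfl fun m _ => by ring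

lemma bernoulliExp_sq_sub_of_unbiased {p : ℝ} {a : ℕ → ℝ}
    (ha : ∑ m ∈ Icc 1 (Fintype.card α), inclusionWeight p (Fintype.card α) m * a m = 1)
    (y : α → ℝ) :
    bernoulliExp p (fun A => (a #A * ∑ i ∈ A, y i - ∑ i, y i) ^ 2) =
      ∑ m ∈ Icc 1 (Fintype.card α), inclusionWeight p (Fintype.card α) m *
        (∑ i, y i ^ 2 + ((m : ℝ) - 1) / ((Fintype.card α : ℝ) - 1) *
          ((∑ i, y i) ^ 2 - ∑ i, y i ^ 2)) * a m ^ 2 - (∑ i, y i) ^ 2 := by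
  set Y := ∑ i, y i with hY
  have expand : bernoulliExp p (fun A => (a #A * ∑ i ∈ A, y i - Y) ^ 2) =
      bernoulliExp p (fun A => a #A ^ 2 * (∑ i ∈ A, y i) ^ 2) -
        2 * Y * bernoulliExp p (fun A => a #A * ∑ i ∈ A, y i) +
          bernoulliExp p (fun _ : Finset α => Y ^ 2) := by
    rw [bernoulliExp, bernoulliExp, bernoulliExp, bernoulliExp, mul_sum, ← sum_sub_distrib,
      ← sum_add_distrib]
    exact sum_congr rfl fun A _ => by ring
  rw [expand, bernoulliExp_card_mul_sq_sum p (fun m => a m ^ 2), bernoulliExp_card_mul_sum, ha,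
    bernoulliExp_const, ← hY]
  ring

end Bernoulli

section RandK

variable {n d k : ℕ}

/-- The random set of nodes that send coordinate `j`. -/
def senders (ω : Omega n d k) (j : Fin d) : Finset (Fin n) :=
  {i | j ∈ (ω i).1}

lemma Exp_sum {ι : Type*} (s : Finset ι) (f : ι → Omega n d k → ℝ) :
    Exp (fun ω => ∑ j ∈ s, f j ω) = ∑ j ∈ s, Exp (f j) := by
  simp only [Exp]
  rw [sum_comm, sum_div]

lemma Exp_const_mul (c : ℝ) (f : Omega n d k → ℝ) : Exp (fun ω => c * f ω) = c * Exp f := by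
  rw [Exp, Exp, ← mul_sum, mul_div_assoc]

lemma card_KSub (d k : ℕ) : Fintype.card (KSub d k) = d.choose k := by
  rw [Fintype.card_finset_len, Fintype.card_fin]

lemma card_filter_mem_KSub (hk : 1 ≤ k) (j : Fin d) :
    (#{S : KSub d k | j ∈ S.1} : ℝ) = pr d k * d.choose k := by
  have card_eq : #{S : KSub d k | j ∈ S.1} = (d - 1).choose (k - 1) := by
    have h := card_filter_powersetCard_subset {j} univ k (subset_univ _) hk
    rw [card_univ, Fintype.card_fin, card_singleton] at h
    rw [← h]
    refine card_bij (fun S _ => S.1) ?_ (fun _ _ _ _ => Subtype.ext) ?_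
    · intro S hS
      simpa [mem_powersetCard, S.2] using hS
    · intro A hA
      simp only [mem_filter, mem_powersetCard_univ, singleton_subset_iff] at hA
      exact ⟨⟨A, hA.1⟩, by simpa using hA.2, rfl⟩
  have d_ne_zero : (d : ℝ) ≠ 0 := Nat.cast_ne_zero.2 j.pos.ne'
  have absorption : d * (d - 1).choose (k - 1) = d.choose k * k := by
    obtain ⟨D, rfl⟩ := Nat.exists_eq_add_of_le' j.pos
    obtain ⟨K, rfl⟩ := Nat.exists_eq_add_of_le' hk
    exact Nat.add_one_mul_choose_eq D K
  rw [card_eq, pr, div_mul_eq_mul_div, eq_div_iff d_ne_zero]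
  exact_mod_cast (mul_comm _ _).trans (absorption.trans (mul_comm _ _))

lemma card_filter_notMem_KSub (hk : 1 ≤ k) (j : Fin d) :
    (#{S : KSub d k | j ∉ S.1} : ℝ) = (1 - pr d k) * d.choose k := by
  have total : (#{S : KSub d k | j ∈ S.1} : ℝ) + #{S : KSub d k | j ∉ S.1} = d.choose k := by
    rw [← card_KSub, ← card_univ]
    exact_mod_cast card_filter_add_card_filter_not fun S : KSub d k => j ∈ S.1
  rw [sub_mul, one_mul, ← card_filter_mem_KSub hk j, ← total, add_sub_cancel_left]

lemma card_filter_senders_eq (hk : 1 ≤ k) (j : Fin d) (A : Finset (Fin n)) :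
    (#{ω : Omega n d k | senders ω j = A} : ℝ) =
      pr d k ^ #A * (1 - pr d k) ^ (n - #A) * (d.choose k : ℝ) ^ n := by
  have card_le : #A ≤ n := card_finset_fin_le A
  have card_eq : #{ω : Omega n d k | senders ω j = A} =
      #{S : KSub d k | j ∈ S.1} ^ #A * #{S : KSub d k | j ∉ S.1} ^ #Aᶜ :=
    card_filter_setOf_eq (fun S : KSub d k => j ∈ S.1) A
  rw [card_eq, card_compl, Fintype.card_fin, Nat.cast_mul, Nat.cast_pow, Nat.cast_pow,
    card_filter_mem_KSub hk, card_filter_notMem_KSub hk, mul_pow, mul_pow,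
    ← pow_mul_pow_sub _ card_le]
  ring

lemma Exp_senders (hk : 1 ≤ k) (hkd : k ≤ d) (j : Fin d) (F : Finset (Fin n) → ℝ) :
    Exp (fun ω : Omega n d k => F (senders ω j)) = bernoulliExp (pr d k) F := by
  have choose_ne_zero : (d.choose k : ℝ) ≠ 0 := Nat.cast_ne_zero.2 (Nat.choose_pos hkd).ne'
  have card_Omega : (Fintype.card (Omega n d k) : ℝ) = (d.choose k : ℝ) ^ n := by
    rw [Fintype.card_fun, card_KSub, Fintype.card_fin, Nat.cast_pow]
  rw [Exp, card_Omega, div_eq_iff (pow_ne_zero _ choose_ne_zero), bernoulliExp, sum_mul,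
    ← sum_fiberwise' univ (fun ω : Omega n d k => senders ω j) F]
  refine sum_congr rfl fun A _ => ?_
  rw [sum_const, nsmul_eq_mul, card_filter_senders_eq hk, Fintype.card_fin]
  ring

lemma spatialEst_eq (x : Fin n → Fin d → ℝ) (T : ℕ → ℝ) (ω : Omega n d k) (j : Fin d) :
    spatialEst x T ω j = 1 / (n : ℝ) *
      (betaBar n d k T / T #(senders ω j) * ∑ i ∈ senders ω j, x i j) := by
  have sum_spars : ∑ i, spars x ω i j = ∑ i ∈ senders ω j, x i j := by
    simp only [spars, senders, sum_filter]
  rw [spatialEst, sum_spars]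
  split_ifs with h
  · rw [mul_assoc]
    rfl
  · have no_senders : senders ω j = ∅ := card_eq_zero.1 (Nat.lt_one_iff.1 (not_le.1 h))
    rw [no_senders, sum_empty, mul_zero, mul_zero]

lemma betaBar_eq_inv_sum_inclusionWeight (n d k : ℕ) (T : ℕ → ℝ) :
    betaBar n d k T = (∑ m ∈ Icc 1 n, inclusionWeight (pr d k) n m / T m)⁻¹ := by
  rw [betaBar]
  congr 1
  refine sum_congr rfl fun m hm => ?_
  rw [inclusionWeight, ← mul_pow_sub_one (Nat.one_le_iff_ne_zero.1 (mem_Icc.1 hm).1)]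
  ring

lemma sum_inclusionWeight_mul_betaBar_div {T : ℕ → ℝ} (hβ : betaBar n d k T ≠ 0) :
    ∑ m ∈ Icc 1 n, inclusionWeight (pr d k) n m * (betaBar n d k T / T m) = 1 := by
  simp_rw [mul_div_left_comm, ← mul_sum]
  rw [betaBar_eq_inv_sum_inclusionWeight] at hβ ⊢
  exact inv_mul_cancel₀ (inv_eq_zero.not.1 hβ)

lemma mseSpatial_eq (hk : 1 ≤ k) (hkd : k ≤ d) (x : Fin n → Fin d → ℝ) {T : ℕ → ℝ}
    (hβ : betaBar n d k T ≠ 0) :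
    mseSpatial n d k x T = (1 / (n : ℝ)) ^ 2 *
      (∑ m ∈ Icc 1 n, inclusionWeight (pr d k) n m *
        (∑ j, ∑ i, x i j ^ 2 + ((m : ℝ) - 1) / ((n : ℝ) - 1) *
          (∑ j, (∑ i, x i j) ^ 2 - ∑ j, ∑ i, x i j ^ 2)) * (betaBar n d k T / T m) ^ 2 -
        ∑ j, (∑ i, x i j) ^ 2) := by
  have unbiased := sum_inclusionWeight_mul_betaBar_div hβ
  set a : ℕ → ℝ := fun m => betaBar n d k T / T m
  have coordinate (j : Fin d) : Exp (fun ω : Omega n d k =>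
        (spatialEst x T ω j - 1 / (n : ℝ) * ∑ i, x i j) ^ 2) = (1 / (n : ℝ)) ^ 2 *
      (∑ m ∈ Icc 1 n, inclusionWeight (pr d k) n m *
        (∑ i, x i j ^ 2 + ((m : ℝ) - 1) / ((n : ℝ) - 1) *
          ((∑ i, x i j) ^ 2 - ∑ i, x i j ^ 2)) * a m ^ 2 - (∑ i, x i j) ^ 2) := by
    have h := bernoulliExp_sq_sub_of_unbiased (α := Fin n) (p := pr d k) (a := a)
      (by simpa only [Fintype.card_fin] using unbiased) fun i => x i j
    rw [← Exp_senders hk hkd j] at h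
    simp only [Fintype.card_fin] at h
    rw [← h, ← Exp_const_mul]
    simp only [spatialEst_eq, ← mul_sub, mul_pow, a]
  simp only [mseSpatial, Exp_sum, coordinate]
  rw [← mul_sum, sum_sub_distrib, sum_comm]
  simp only [← sum_mul, ← mul_sum, sum_add_distrib, sum_sub_distrib, a]

lemma sum_sq_sum_eq (x : Fin n → Fin d → ℝ) :
    ∑ j, (∑ i, x i j) ^ 2 = ∑ i, ∑ j, x i j ^ 2 +
      2 * ∑ i, ∑ l, if i < l then ∑ j, x i j * x l j else 0 := by
  have symm (i l : Fin n) : ∑ j, x i j * x l j = ∑ j, x l j * x i j := by simp only [mul_comm]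
  simp only [sq, sum_mul_sum, ← sum_sum_eq_sum_diag_add_two_mul_sum_lt symm]
  rw [sum_comm]
  exact sum_congr rfl fun i _ => sum_comm

lemma pr_pos (hk : 1 ≤ k) (hkd : k ≤ d) : 0 < pr d k :=
  div_pos (Nat.cast_pos.2 hk) (Nat.cast_pos.2 (hk.trans hkd))

lemma pr_lt_one (hkd : k < d) : pr d k < 1 :=
  (div_lt_one (Nat.cast_pos.2 (Nat.zero_lt_of_lt hkd))).2 (Nat.cast_lt.2 hkd)

lemma inclusionWeight_pr_pos (hk : 1 ≤ k) (hkd : k < d) {m : ℕ} (hmn : m ≤ n) :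
    0 < inclusionWeight (pr d k) n m :=
  inclusionWeight_pos (pr_pos hk hkd.le) (pr_lt_one hkd) hmn

lemma betaBar_pos (hn : 1 ≤ n) (hk : 1 ≤ k) (hkd : k < d) {T : ℕ → ℝ}
    (hT : ∀ m ∈ Icc 1 n, 0 < T m) : 0 < betaBar n d k T := by
  rw [betaBar_eq_inv_sum_inclusionWeight, inv_pos]
  exact sum_pos (fun m hm => div_pos (inclusionWeight_pr_pos hk hkd (mem_Icc.1 hm).2) (hT m hm))
    (nonempty_Icc.2 hn)

lemma one_add_mul_div_pos {r : ℝ} (hr : -1 < r) {m : ℕ} (hm : m ∈ Icc 1 n) :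
    0 < 1 + r * (((m : ℝ) - 1) / ((n : ℝ) - 1)) := by
  obtain ⟨one_le, le_n⟩ := mem_Icc.1 hm
  have num_nonneg : (0 : ℝ) ≤ m - 1 := sub_nonneg.2 (Nat.one_le_cast.2 one_le)
  have num_le : (m : ℝ) - 1 ≤ n - 1 := sub_le_sub_right (Nat.cast_le.2 le_n) 1
  have ratio_nonneg := div_nonneg num_nonneg (num_nonneg.trans num_le)
  have ratio_le_one := div_le_one_of_le₀ num_le (num_nonneg.trans num_le)
  set s := ((m : ℝ) - 1) / ((n : ℝ) - 1)
  rcases le_total 0 r with r_nonneg | r_nonpos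
  · positivity
  · linarith [le_mul_of_le_one_right r_nonpos ratio_le_one]

end RandK

/-- optimal scaling function: under `n ≥ 2`, `1 ≤ k < d`,
`R₁ > 0` and `R₂ > −R₁`, the scaling function `T*(m) = 1 + (R₂/R₁)·(m−1)/(n−1)`
minimizes the MSE of the Rand-k-Spatial estimator over the whole family. -/
theorem spatial_optimal_T (n d k : ℕ) (hn : 2 ≤ n) (hk : 1 ≤ k) (hkd : k < d)
    (x : Fin n → Fin d → ℝ) (R1 R2 : ℝ)
    (hR1 : R1 = ∑ i : Fin n, ∑ j : Fin d, x i j ^ 2)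
    (hR2 : R2 = 2 * ∑ i : Fin n, ∑ l : Fin n,
        if i < l then ∑ j : Fin d, x i j * x l j else 0)
    (hR1pos : 0 < R1) (hR2gt : -R1 < R2)
    (Tstar : ℕ → ℝ)
    (hTstar : ∀ m : ℕ, Tstar m = 1 + (R2 / R1) * ((m : ℝ) - 1) / ((n : ℝ) - 1)) :
    ∀ T : ℕ → ℝ, (∀ m ∈ Finset.Icc 1 n, T m ≠ 0) →
      (∑ m ∈ Finset.Icc 1 n,
          (pr d k / T m) * ((n - 1).choose (m - 1) : ℝ) * pr d k ^ (m - 1)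
            * (1 - pr d k) ^ (n - m)) ≠ 0 →
      mseSpatial n d k x Tstar ≤ mseSpatial n d k x T := by
  intro T _ hS
  have Tstar_pos : ∀ m ∈ Icc 1 n, 0 < Tstar m := fun m hm => by
    rw [hTstar, mul_div_assoc]
    exact one_add_mul_div_pos ((lt_div_iff₀ hR1pos).2 (by linarith)) hm
  have scaling (m : ℕ) : R1 + ((m : ℝ) - 1) / ((n : ℝ) - 1) * R2 = R1 * Tstar m := by
    rw [hTstar]
    field_simp
  have sum_sq : ∑ j, ∑ i, x i j ^ 2 = R1 := sum_comm.trans hR1.symm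
  have sq_sum : ∑ j, (∑ i, x i j) ^ 2 = R1 + R2 := by rw [sum_sq_sum_eq, hR1, hR2]
  have hβ : betaBar n d k T ≠ 0 := inv_ne_zero hS
  have hβstar : betaBar n d k Tstar ≠ 0 :=
    (betaBar_pos (one_le_two.trans hn) hk hkd Tstar_pos).ne'
  rw [mseSpatial_eq hk hkd.le x hβ, mseSpatial_eq hk hkd.le x hβstar]
  simp only [sum_sq, sq_sum, add_sub_cancel_left, scaling]
  gcongr ?_ * (?_ - _)
  have coeff_nonneg : ∀ m ∈ Icc 1 n, 0 ≤ inclusionWeight (pr d k) n m * (R1 * Tstar m) :=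
    fun m hm => (mul_pos (inclusionWeight_pr_pos hk hkd (mem_Icc.1 hm).2)
      (mul_pos hR1pos (Tstar_pos m hm))).le
  refine sum_mul_sq_le_sum_mul_sq_of_mul_eq (c := R1 * betaBar n d k Tstar) coeff_nonneg
    (fun m hm => ?_) ((sum_inclusionWeight_mul_betaBar_div hβ).trans
      (sum_inclusionWeight_mul_betaBar_div hβstar).symm)
  field [(Tstar_pos m hm).ne']
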